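/- For every τ in the upper half-plane H₁, the Wronskian-type identity θ₃(2τ)·D_τh̃₀(τ) + θ₂(2τ)·D_τh̃₁(τ) = −1 holds, where D_τ is the raising operator at weight −5/2, h̃₀(τ) = θ₂(2τ)/η(τ)⁶ and h̃₁(τ) = −θ₃(2τ)/η(τ)⁶. -/

import Mathlib

/-!
STATEMENT 4: The Wronskian-type identity θ₃(2τ)·D_τh̃₀(τ) + θ₂(2τ)·D_τh̃₁(τ) = −1,
where D_τ is the raising operator at weight −5/2.
-/

noncomputable section
open Complex Real

namespace KZ

def theta2 (τ z : ℂ) : ℂ :=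
  ∑' n : ℤ, Complex.exp (π * I * (n + 1/2)^2 * τ + 2 * π * I * (n + 1/2) * z)

def theta3 (τ z : ℂ) : ℂ :=
  ∑' n : ℤ, Complex.exp (π * I * (n:ℂ)^2 * τ + 2 * π * I * n * z)

def eta (τ : ℂ) : ℂ :=
  Complex.exp (π * I * τ / 12) * ∏' n : ℕ, (1 - Complex.exp (2 * π * I * (n + 1) * τ))

/-- h̃₀(τ) = θ₂(2τ)/η(τ)⁶. -/
def htilde0 (τ : ℂ) : ℂ := theta2 (2*τ) 0 / (eta τ)^6

/-- h̃₁(τ) = −θ₃(2τ)/η(τ)⁶. -/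
def htilde1 (τ : ℂ) : ℂ := - theta3 (2*τ) 0 / (eta τ)^6

/-- The raising operator at weight −5/2: D_τ f = (i/π)(∂_τ f + (5i/(4τ₂)) f). -/
def Dtau (f : ℂ → ℂ) (τ : ℂ) : ℂ :=
  (I / π) * (deriv f τ + (5 * I / (4 * τ.im)) * f τ)

/-! ### Finite form of Jacobi's identity -/

def qP (q : ℂ) (n : ℕ) : ℂ := ∏ i ∈ Finset.range n, (1 - q ^ (i + 1))

def qR (q : ℂ) (m : ℤ) : ℂ := if m < 0 then 0 else (qP q m.toNat)⁻¹

lemma qP_succ (q : ℂ) (n : ℕ) : qP q (n + 1) = qP q n * (1 - q ^ (n + 1)) := by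
  simp [qP, Finset.prod_range_succ]

lemma one_sub_pow_ne {q : ℂ} (hq : ‖q‖ < 1) (n : ℕ) : 1 - q ^ (n + 1) ≠ 0 := by
  intro h
  have h1 : q ^ (n + 1) = 1 := (sub_eq_zero.mp h).symm
  have h2 : ‖q‖ ^ (n + 1) < 1 := pow_lt_one₀ (norm_nonneg _) hq (by simp)
  rw [← norm_pow, h1] at h2
  simp at h2

lemma qP_ne {q : ℂ} (hq : ‖q‖ < 1) (n : ℕ) : qP q n ≠ 0 :=
  Finset.prod_ne_zero_iff.mpr fun i _ => one_sub_pow_ne hq i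

lemma qR_pred {q : ℂ} (hq : ‖q‖ < 1) (m : ℤ) : qR q (m - 1) = (1 - q ^ m) * qR q m := by
  rcases lt_trichotomy m 0 with h | h | h
  · simp [qR, h, show m - 1 < 0 by omega]
  · subst h; simp [qR]
  · obtain ⟨n, rfl⟩ : ∃ n : ℕ, m = n + 1 := ⟨(m - 1).toNat, by omega⟩
    have h1 : ((n : ℤ) + 1).toNat = n + 1 := by omega
    have h3 : q ^ ((n : ℤ) + 1) = q ^ (n + 1) := by exact_mod_cast zpow_natCast q (n + 1)
    have := qP_ne hq n
    have := one_sub_pow_ne hq n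
    rw [qR, qR, if_neg (by omega), if_neg (by omega), h1, qP_succ, h3]
    simp only [add_sub_cancel_right, Int.toNat_natCast]
    field_simp

def gg (τ : ℂ) (k : ℤ) : ℂ := (-1) ^ k * Complex.exp (π * I * (k + 1/2) ^ 2 * τ)

def qq (τ : ℂ) : ℂ := Complex.exp (2 * π * I * τ)

lemma qq_ne (τ : ℂ) : qq τ ≠ 0 := Complex.exp_ne_zero _

lemma qq_lt {τ : ℂ} (hτ : 0 < τ.im) : ‖qq τ‖ < 1 := by
  rw [qq, Complex.norm_exp, Real.exp_lt_one_iff]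
  have : (2 * π * I * τ).re = - (2 * π * τ.im) := by simp
  rw [this]
  have := Real.pi_pos
  have : 0 < 2 * π * τ.im := by positivity
  linarith

lemma qq_zpow (τ : ℂ) (k : ℤ) : qq τ ^ k = Complex.exp (2 * π * I * k * τ) := by
  rw [qq, ← Complex.exp_int_mul]; congr 1; ring

lemma gg_succ (τ : ℂ) (k : ℤ) : gg τ (k + 1) = - gg τ k * qq τ ^ (k + 1) := by
  rw [gg, gg, qq_zpow, zpow_add₀ (by norm_num), zpow_one,
    show (-((-1 : ℂ) ^ k * Complex.exp (π * I * (k + 1/2) ^ 2 * τ)) *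
      Complex.exp (2 * π * I * (k + 1 : ℤ) * τ)) = (-1) ^ k * -1 *
      (Complex.exp (π * I * (k + 1/2) ^ 2 * τ) * Complex.exp (2 * π * I * (k + 1 : ℤ) * τ)) by ring,
    ← Complex.exp_add]
  congr 2
  push_cast
  ring

lemma gg_pred (τ : ℂ) (k : ℤ) : gg τ (k - 1) = - gg τ k * (qq τ ^ k)⁻¹ := by
  have := gg_succ τ (k - 1)
  rw [sub_add_cancel] at this
  rw [this]
  field_simp [zpow_ne_zero k (qq_ne τ)]

def aa (τ : ℂ) (n : ℕ) (k : ℤ) : ℂ :=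
  gg τ k * (qP (qq τ) (2 * n + 1) * qR (qq τ) (n - k) * qR (qq τ) (n + k + 1))

lemma aa_succ {τ : ℂ} (hτ : 0 < τ.im) (n : ℕ) (k : ℤ) :
    aa τ (n + 1) k = (1 + (qq τ ^ (n + 1)) ^ 2) * aa τ n k
      - qq τ ^ (n + 1) * (aa τ n (k - 1) + aa τ n (k + 1)) := by
  have hq := qq_lt hτ
  have hq0 := qq_ne τ
  simp only [aa, gg_succ, gg_pred]
  generalize hqq : qq τ = q at *
  have e1 : qR q (n - k) = (1 - q ^ ((n : ℤ) + 1 - k)) * qR q (n + 1 - k) := by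
    rw [← qR_pred hq]; congr 1; ring
  have e2 : qR q (n + k + 1) = (1 - q ^ ((n : ℤ) + k + 2)) * qR q (n + k + 2) := by
    rw [← qR_pred hq]; congr 1; ring
  have e3 : qR q (n + (k - 1) + 1) = (1 - q ^ ((n : ℤ) + k + 1)) * qR q (n + k + 1) := by
    rw [← qR_pred hq]; congr 1; ring
  have e4 : qR q (n - (k + 1)) = (1 - q ^ ((n : ℤ) - k)) * qR q (n - k) := by
    rw [← qR_pred hq]; congr 1; ring
  have e5 : qR q (n - (k - 1)) = qR q (n + 1 - k) := by congr 1; ring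
  have e6 : qR q (n + (k + 1) + 1) = qR q (n + k + 2) := by congr 1; ring
  have e7 : qR q ((n + 1 : ℕ) - k) = qR q (n + 1 - k) := by congr 1
  have e8 : qR q ((n + 1 : ℕ) + k + 1) = qR q (n + k + 2) := by congr 1; push_cast; ring
  rw [e3, e4, e5, e6, e7, e8, e1, e2, show 2 * (n + 1) + 1 = (2 * n + 1 + 1) + 1 by ring, qP_succ,
    qP_succ]
  generalize qR q (n + 1 - k) = R
  generalize qR q (n + k + 2) = R'
  have hX := zpow_ne_zero k hq0
  have z1 : q ^ ((n : ℤ) + 1 - k) = q ^ n * q / q ^ k := by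
    rw [zpow_sub₀ hq0, zpow_add₀ hq0]; simp
  have z2 : q ^ ((n : ℤ) + k + 2) = q ^ n * q ^ k * q ^ 2 := by
    rw [zpow_add₀ hq0, zpow_add₀ hq0]; norm_cast
  have z3 : q ^ ((n : ℤ) + k + 1) = q ^ n * q ^ k * q := by
    rw [zpow_add₀ hq0, zpow_add₀ hq0]; simp
  have z4 : q ^ ((n : ℤ) - k) = q ^ n / q ^ k := by
    rw [zpow_sub₀ hq0]; simp
  have z5 : q ^ (k + 1) = q ^ k * q := by
    rw [zpow_add₀ hq0]; simp
  rw [z1, z2, z3, z4, z5]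
  generalize q ^ k = X at *
  have w1 : q ^ (2 * n + 1 + 1) = (q ^ n) ^ 2 * q ^ 2 := by ring
  have w2 : q ^ (2 * n + 1 + 1 + 1) = (q ^ n) ^ 2 * q ^ 3 := by ring
  have w3 : q ^ (n + 1) = q ^ n * q := by ring
  rw [w1, w2, w3]
  generalize q ^ n = Q at *
  field_simp
  ring

lemma aa_support (τ : ℂ) (n : ℕ) (k : ℤ) (hk : k ∉ Finset.Icc (-(n : ℤ) - 1) n) :
    aa τ n k = 0 := by
  have : (n : ℤ) - k < 0 ∨ (n : ℤ) + k + 1 < 0 := by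
    simp only [Finset.mem_Icc] at hk; omega
  rcases this with h | h <;> simp [aa, qR, h]

lemma aa_summable (τ : ℂ) (n : ℕ) (c : ℤ → ℂ) : Summable fun k => c k * aa τ n k :=
  summable_of_ne_finset_zero (s := Finset.Icc (-(n : ℤ) - 1) n)
    fun k hk => by rw [aa_support τ n k hk, mul_zero]

lemma aa_tsum {τ : ℂ} (hτ : 0 < τ.im) (n : ℕ) :
    ∑' k : ℤ, ((k : ℂ) + 1/2) * aa τ n k = Complex.exp (π * I * τ / 4) * qP (qq τ) n ^ 2 := by
  induction n with
  | zero =>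
    have h1 := one_sub_pow_ne (qq_lt hτ) 0
    rw [tsum_eq_sum (s := Finset.Icc (-1 : ℤ) 0)
      fun k hk => by rw [aa_support τ 0 k (by simpa using hk), mul_zero]]
    rw [show Finset.Icc (-1 : ℤ) 0 = {-1, 0} from rfl, Finset.sum_pair (by norm_num)]
    have e1 : Complex.exp (π * I * (-1 + 1/2) ^ 2 * τ) = Complex.exp (π * I * τ / 4) := by
      congr 1; ring
    have e2 : Complex.exp (π * I * (0 + 1/2) ^ 2 * τ) = Complex.exp (π * I * τ / 4) := by
      congr 1; ring
    simp only [aa, gg, qR, qP, Int.cast_neg, Int.cast_one, Int.cast_zero, e1, e2]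
    simp at h1 ⊢
    field_simp
    ring
  | succ n ih =>
    rw [qP_succ, mul_pow, ← mul_assoc, ← ih]
    generalize hQ : qq τ ^ (n + 1) = Q
    have hm : ∑' k : ℤ, ((k : ℂ) + 1/2) * aa τ n (k - 1)
        = ∑' k : ℤ, ((k : ℂ) + 1/2 + 1) * aa τ n k := by
      rw [← (Equiv.addRight (1 : ℤ)).tsum_eq]
      refine tsum_congr fun k => ?_
      simp only [Equiv.coe_addRight, add_sub_cancel_right]
      push_cast; ring
    have hp : ∑' k : ℤ, ((k : ℂ) + 1/2) * aa τ n (k + 1)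
        = ∑' k : ℤ, ((k : ℂ) + 1/2 - 1) * aa τ n k := by
      rw [← (Equiv.subRight (1 : ℤ)).tsum_eq]
      refine tsum_congr fun k => ?_
      simp only [Equiv.subRight_apply, sub_add_cancel]
      push_cast; ring
    have sm : Summable fun k : ℤ => ((k : ℂ) + 1/2) * aa τ n (k - 1) := by
      rw [← (Equiv.addRight (1 : ℤ)).summable_iff]
      refine (aa_summable τ n fun k => (k : ℂ) + 1/2 + 1).congr fun k => ?_
      simp only [Function.comp, Equiv.coe_addRight, add_sub_cancel_right]
      push_cast; ring
    have sp : Summable fun k : ℤ => ((k : ℂ) + 1/2) * aa τ n (k + 1) := by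
      rw [← (Equiv.subRight (1 : ℤ)).summable_iff]
      refine (aa_summable τ n fun k => (k : ℂ) + 1/2 - 1).congr fun k => ?_
      simp only [Function.comp, Equiv.subRight_apply, sub_add_cancel]
      push_cast; ring
    have s0 := aa_summable τ n fun k => (k : ℂ) + 1/2
    have s1 : Summable fun k => aa τ n k := by simpa using aa_summable τ n fun k => 1
    have hsum : ∑' k : ℤ, ((k : ℂ) + 1/2) * aa τ (n + 1) k =
        (1 + Q ^ 2) * ∑' k : ℤ, ((k : ℂ) + 1/2) * aa τ n k
        - Q * (∑' k : ℤ, ((k : ℂ) + 1/2) * aa τ n (k - 1)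
          + ∑' k : ℤ, ((k : ℂ) + 1/2) * aa τ n (k + 1)) := by
      rw [← sm.tsum_add sp, ← tsum_mul_left, ← tsum_mul_left,
        ← (s0.mul_left _).tsum_sub ((sm.add sp).mul_left _)]
      refine tsum_congr fun k => ?_
      rw [aa_succ hτ, hQ]; ring
    have hm2 : ∑' k : ℤ, ((k : ℂ) + 1/2 + 1) * aa τ n k
        = ∑' k : ℤ, ((k : ℂ) + 1/2) * aa τ n k + ∑' k : ℤ, aa τ n k := by
      rw [← s0.tsum_add s1]; exact tsum_congr fun k => by ring
    have hp2 : ∑' k : ℤ, ((k : ℂ) + 1/2 - 1) * aa τ n k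
        = ∑' k : ℤ, ((k : ℂ) + 1/2) * aa τ n k - ∑' k : ℤ, aa τ n k := by
      rw [← s0.tsum_sub s1]; exact tsum_congr fun k => by ring
    rw [hsum, hm, hp, hm2, hp2]; ring

/-! ### Summability -/

lemma norm_gauss (τ : ℂ) (k : ℤ) (a c : ℝ) :
    ‖Complex.exp (c * (π * I * ((k : ℂ) + a) ^ 2 * τ))‖
      = Real.exp (-π * (k + a) ^ 2 * (c * τ.im)) := by
  rw [Complex.norm_exp]
  congr 1
  have : (c * (π * I * ((k : ℂ) + a) ^ 2 * τ)) = ((c * π * (k + a) ^ 2 : ℝ) : ℂ) * (I * τ) := by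
    push_cast; ring
  rw [this, Complex.re_ofReal_mul]
  simp
  ring

lemma summable_gauss {τ : ℂ} (hτ : 0 < τ.im) (j : ℕ) (a : ℝ) {c : ℝ} (hc : 0 < c) :
    Summable fun k : ℤ => ‖((k : ℂ) + a) ^ j * Complex.exp (c * (π * I * ((k : ℂ) + a) ^ 2 * τ))‖ := by
  refine (HurwitzKernelBounds.summable_f_int j a (mul_pos hc hτ)).congr fun k => ?_
  rw [norm_mul, norm_gauss, norm_pow, HurwitzKernelBounds.f_int]
  congr 2
  rw [← Complex.ofReal_intCast, ← Complex.ofReal_add, Complex.norm_real, Real.norm_eq_abs]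

lemma norm_gg_summable {τ : ℂ} (hτ : 0 < τ.im) :
    Summable fun k : ℤ => ‖((k : ℂ) + 1/2) * gg τ k‖ := by
  refine (summable_gauss hτ 1 (1/2) one_pos).congr fun k => ?_
  simp [gg]

/-! ### Jacobi's identity for the cube of eta -/

lemma tendsto_qP {τ : ℂ} (hτ : 0 < τ.im) :
    Filter.Tendsto (qP (qq τ)) Filter.atTop (nhds (∏' n : ℕ, (1 - qq τ ^ (n + 1)))) :=
  (ModularForm.multipliable_one_sub_pow (qq_lt hτ)).hasProd.tendsto_prod_nat

lemma qPinf_ne {τ : ℂ} (hτ : 0 < τ.im) : ∏' n : ℕ, (1 - qq τ ^ (n + 1)) ≠ 0 := by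
  have := ModularForm.eta_tprod_ne_zero (z := τ) hτ
  simp only [ModularForm.eta_q_eq_pow] at this
  exact this

lemma tendsto_qR {τ : ℂ} (hτ : 0 < τ.im) :
    Filter.Tendsto (qR (qq τ)) Filter.atTop (nhds (∏' n : ℕ, (1 - qq τ ^ (n + 1)))⁻¹) := by
  have h := (tendsto_qP hτ).inv₀ (qPinf_ne hτ)
  have h2 : Filter.Tendsto Int.toNat Filter.atTop Filter.atTop := by
    refine Filter.tendsto_atTop.mpr fun b => ?_
    filter_upwards [Filter.eventually_ge_atTop (b : ℤ)] with m hm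
    omega
  refine (h.comp h2).congr' ?_
  filter_upwards [Filter.eventually_ge_atTop (0 : ℤ)] with m hm
  simp [qR, not_lt.mpr hm]

lemma bound_seq {u : ℕ → ℂ} {l : ℂ} (h : Filter.Tendsto u Filter.atTop (nhds l)) :
    ∃ C, 0 ≤ C ∧ ∀ n, ‖u n‖ ≤ C := by
  obtain ⟨C, hC⟩ := h.norm.bddAbove_range
  exact ⟨C, (norm_nonneg _).trans (hC ⟨0, rfl⟩), fun n => hC ⟨n, rfl⟩⟩

lemma jacobi_cube {τ : ℂ} (hτ : 0 < τ.im) :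
    ∑' k : ℤ, ((k : ℂ) + 1/2) * gg τ k
      = Complex.exp (π * I * τ / 4) * (∏' n : ℕ, (1 - qq τ ^ (n + 1))) ^ 3 := by
  set L := ∏' n : ℕ, (1 - qq τ ^ (n + 1)) with hL
  have hL0 : L ≠ 0 := qPinf_ne hτ
  have hP : Filter.Tendsto (qP (qq τ)) Filter.atTop (nhds L) := tendsto_qP hτ
  have hR : Filter.Tendsto (qR (qq τ)) Filter.atTop (nhds L⁻¹) := tendsto_qR hτ
  obtain ⟨C, hC0, hC⟩ := bound_seq hP
  obtain ⟨D, hD0, hD⟩ := bound_seq (hP.inv₀ hL0)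
  have hD' : ∀ m, ‖qR (qq τ) m‖ ≤ D := by
    intro m
    rw [qR]
    split_ifs
    · simpa using hD0
    · exact hD _
  have key : Filter.Tendsto (fun n => ∑' k : ℤ, ((k : ℂ) + 1/2) * aa τ n k) Filter.atTop
      (nhds (∑' k : ℤ, ((k : ℂ) + 1/2) * (gg τ k * (L * L⁻¹ * L⁻¹)))) := by
    refine tendsto_tsum_of_dominated_convergence
      (bound := fun k : ℤ => ‖((k : ℂ) + 1/2) * gg τ k‖ * (C * D * D))
      ((norm_gg_summable hτ).mul_right _) ?_ ?_
    · intro k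
      have t1 : Filter.Tendsto (fun n : ℕ => 2 * n + 1) Filter.atTop Filter.atTop :=
        Filter.tendsto_atTop.mpr fun b => by
          filter_upwards [Filter.eventually_ge_atTop b] with m hm
          omega
      have t2 : Filter.Tendsto (fun n : ℕ => (n : ℤ) - k) Filter.atTop Filter.atTop :=
        Filter.tendsto_atTop.mpr fun b => by
          filter_upwards [Filter.eventually_ge_atTop (b + k).toNat] with m hm
          omega
      have t3 : Filter.Tendsto (fun n : ℕ => (n : ℤ) + k + 1) Filter.atTop Filter.atTop :=
        Filter.tendsto_atTop.mpr fun b => by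
          filter_upwards [Filter.eventually_ge_atTop (b - k).toNat] with m hm
          omega
      exact ((((hP.comp t1).mul (hR.comp t2)).mul (hR.comp t3)).const_mul _).const_mul _
    · refine Filter.Eventually.of_forall fun n k => ?_
      rw [aa, ← mul_assoc, norm_mul]
      refine mul_le_mul_of_nonneg_left ?_ (norm_nonneg _)
      rw [norm_mul, norm_mul]
      exact mul_le_mul (mul_le_mul (hC _) (hD' _) (norm_nonneg _) hC0) (hD' _) (norm_nonneg _)
        (by positivity)
  have key2 : Filter.Tendsto (fun n => ∑' k : ℤ, ((k : ℂ) + 1/2) * aa τ n k) Filter.atTop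
      (nhds (Complex.exp (π * I * τ / 4) * L ^ 2)) := by
    simp only [aa_tsum hτ]
    exact (hP.pow 2).const_mul _
  have h := tendsto_nhds_unique key key2
  rw [mul_inv_cancel₀ hL0, one_mul] at h
  simp only [← mul_assoc] at h
  rw [tsum_mul_right] at h
  rw [← div_eq_mul_inv, div_eq_iff hL0] at h
  rw [h]; ring

lemma eta_six (τ : ℂ) (hτ : 0 < τ.im) :
    (∑' k : ℤ, ((k : ℂ) + 1/2) * gg τ k) ^ 2 = eta τ ^ 6 := by
  rw [jacobi_cube hτ, eta, mul_pow, mul_pow, ← pow_mul, ← Complex.exp_nat_mul, ← Complex.exp_nat_mul]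
  have : ∀ n : ℕ, qq τ ^ (n + 1) = Complex.exp (2 * π * I * (n + 1) * τ) := by
    intro n
    rw [qq, ← Complex.exp_nat_mul]; congr 1; push_cast; ring
  simp only [this]
  congr 2
  push_cast; ring

lemma eta_eq (τ : ℂ) : eta τ = ModularForm.eta τ := by
  rw [eta, ModularForm.eta]
  simp only [ModularForm.eta_q_eq_cexp, Function.Periodic.qParam]
  congr 2
  push_cast; ring

/-! ### Theta functions -/

def th (a : ℝ) (τ : ℂ) : ℂ := ∑' n : ℤ, Complex.exp ((2 : ℝ) * (π * I * ((n : ℂ) + a) ^ 2 * τ))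

lemma th_deriv (a : ℝ) {τ : ℂ} (hτ : 0 < τ.im) :
    HasDerivAt (th a) (∑' n : ℤ, 2 * π * I * (((n : ℂ) + a) ^ 2 *
      Complex.exp ((2 : ℝ) * (π * I * ((n : ℂ) + a) ^ 2 * τ)))) τ := by
  have hU : IsOpen {w : ℂ | τ.im / 2 < w.im} := isOpen_lt continuous_const Complex.continuous_im
  have hmem : τ ∈ {w : ℂ | τ.im / 2 < w.im} := by simp only [Set.mem_ofPred_eq]; linarith
  have hu : Summable (HurwitzKernelBounds.f_int 0 a τ.im) :=
    HurwitzKernelBounds.summable_f_int 0 a hτ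
  have hf : ∀ n : ℤ, DifferentiableOn ℂ
      (fun w : ℂ => Complex.exp ((2 : ℝ) * (π * I * ((n : ℂ) + a) ^ 2 * w)))
      {w : ℂ | τ.im / 2 < w.im} := fun n => by fun_prop
  have hle : ∀ (n : ℤ) (w : ℂ), w ∈ {w : ℂ | τ.im / 2 < w.im} →
      ‖Complex.exp ((2 : ℝ) * (π * I * ((n : ℂ) + a) ^ 2 * w))‖
        ≤ HurwitzKernelBounds.f_int 0 a τ.im n := by
    intro n w hw
    rw [norm_gauss, HurwitzKernelBounds.f_int, pow_zero, one_mul, Real.exp_le_exp]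
    have h1 : τ.im ≤ 2 * w.im := by
      simp only [Set.mem_ofPred_eq] at hw; linarith
    have h2 : 0 ≤ π * (n + a) ^ 2 := by positivity
    nlinarith
  have h1 := Complex.hasSum_deriv_of_summable_norm hu hf hU hle hmem
  have h2 := (Complex.differentiableOn_tsum_of_summable_norm hu hf hU hle).differentiableAt
    (hU.mem_nhds hmem)
  have h3 := h2.hasDerivAt
  rw [← h1.tsum_eq] at h3
  refine h3.congr_deriv (tsum_congr fun n => ?_)
  have h4 : HasDerivAt (fun w : ℂ => (2 : ℝ) * (π * I * ((n : ℂ) + a) ^ 2 * w))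
      ((2 : ℝ) * (π * I * ((n : ℂ) + a) ^ 2 * 1)) τ :=
    ((hasDerivAt_id τ).const_mul _).const_mul _
  rw [h4.cexp.deriv]
  push_cast; ring

lemma theta3_eq (τ : ℂ) : theta3 (2 * τ) 0 = th 0 τ := by
  rw [theta3, th]
  refine tsum_congr fun n => ?_
  congr 1; push_cast; ring

lemma theta2_eq (τ : ℂ) : theta2 (2 * τ) 0 = th (1/2) τ := by
  rw [theta2, th]
  refine tsum_congr fun n => ?_
  congr 1; push_cast; ring

def uu (τ : ℂ) (k : ℤ) : ℂ := ((k : ℂ) + 1/2) * Complex.exp (π * I * (k + 1/2) ^ 2 * τ)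

lemma uu_tsum (τ : ℂ) : ∑' k : ℤ, uu τ k = 0 := by
  have h : ∑' k : ℤ, uu τ k = - ∑' k : ℤ, uu τ k := by
    rw [← tsum_neg]
    rw [← (Equiv.subLeft (-1 : ℤ)).tsum_eq]
    refine tsum_congr fun k => ?_
    simp only [uu, Equiv.subLeft_apply]
    push_cast
    rw [show ((-1 : ℂ) - k + 1/2) = -(k + 1/2) by ring, neg_sq]
    ring
  have h2 : (2 : ℂ) * ∑' k : ℤ, uu τ k = 0 := by linear_combination h
  simpa using h2

lemma wronskian_sum {τ : ℂ} (hτ : 0 < τ.im) :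
    th 0 τ * (∑' n : ℤ, 2 * π * I * (((n : ℂ) + (1/2 : ℝ)) ^ 2 *
      Complex.exp ((2 : ℝ) * (π * I * ((n : ℂ) + (1/2 : ℝ)) ^ 2 * τ))))
    - th (1/2) τ * (∑' n : ℤ, 2 * π * I * (((n : ℂ) + (0 : ℝ)) ^ 2 *
      Complex.exp ((2 : ℝ) * (π * I * ((n : ℂ) + (0 : ℝ)) ^ 2 * τ))))
    = π * I * (∑' k : ℤ, ((k : ℂ) + 1/2) * gg τ k) ^ 2 := by
  have A0 := summable_gauss hτ 0 0 two_pos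
  have A2 := summable_gauss hτ 2 0 two_pos
  have B0 := summable_gauss hτ 0 (1/2) two_pos
  have B2 := summable_gauss hτ 2 (1/2) two_pos
  simp only [pow_zero, one_mul] at A0 B0
  rw [tsum_mul_left, tsum_mul_left, th, th]
  have hu : Summable fun k => ‖uu τ k‖ := by
    refine (norm_gg_summable hτ).congr fun k => ?_
    simp [gg, uu]
  have hg := norm_gg_summable hτ
  have e1 := tsum_mul_tsum_of_summable_norm A0 B2
  have e2 := tsum_mul_tsum_of_summable_norm A2 B0
  have e3 := tsum_mul_tsum_of_summable_norm hu hu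
  have e4 := tsum_mul_tsum_of_summable_norm hg hg
  rw [uu_tsum, zero_mul] at e3
  have s1 := summable_mul_of_summable_norm A0 B2
  have s2 := summable_mul_of_summable_norm A2 B0
  have s3 := summable_mul_of_summable_norm hu hu
  have s4 := summable_mul_of_summable_norm hg hg
  have inj : Function.Injective (fun p : ℤ × ℤ => (p.2 + p.1, p.2 - p.1)) := by
    rintro ⟨a, b⟩ ⟨c, d⟩ h
    simp only [Prod.mk.injEq] at h ⊢
    omega
  have e5 := s4.tsum_add s3
  rw [← e3, ← e4, add_zero] at e5
  have pm : ∀ k l : ℤ, (((k : ℂ) + 1/2) * gg τ k) * (((l : ℂ) + 1/2) * gg τ l)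
      + uu τ k * uu τ l = (1 + (-1) ^ (k + l)) * (uu τ k * uu τ l) := by
    intro k l
    rw [zpow_add₀ (by norm_num), gg, gg, uu, uu]; ring
  simp only [pm] at e5
  rw [← inj.tsum_eq] at e5
  · rw [pow_two, ← e5]
    have e6 := s1.tsum_sub s2
    rw [← e1, ← e2] at e6
    rw [show ∀ a b c d : ℂ, a * (2 * π * I * b) - c * (2 * π * I * d)
      = 2 * π * I * (a * b - d * c) from fun a b c d => by ring, ← e6, ← tsum_mul_left,
      ← tsum_mul_left]
    refine tsum_congr fun p => ?_
    obtain ⟨m, n⟩ := p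
    have ev : (-1 : ℂ) ^ (n + m + (n - m)) = 1 :=
      Even.neg_one_zpow ⟨n, by ring⟩
    simp only [ev, uu]
    have x1 : ∀ x y z w : ℂ, (z * Complex.exp x) * (w * Complex.exp y)
        = z * w * Complex.exp (x + y) := fun x y z w => by rw [Complex.exp_add]; ring
    have x2 : ∀ x y w : ℂ, Complex.exp x * (w * Complex.exp y)
        = w * Complex.exp (x + y) := fun x y w => by rw [Complex.exp_add]; ring
    have x3 : ∀ x y w : ℂ, w * Complex.exp x * Complex.exp y
        = w * Complex.exp (x + y) := fun x y w => by rw [Complex.exp_add]; ring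
    rw [x1, x2, x3]
    have y : π * I * (((n + m : ℤ) : ℂ) + 1/2) ^ 2 * τ + π * I * (((n - m : ℤ) : ℂ) + 1/2) ^ 2 * τ
      = ((2 : ℝ) : ℂ) * (π * I * ((m : ℂ) + (0 : ℝ)) ^ 2 * τ)
        + (2 : ℝ) * (π * I * ((n : ℂ) + (1/2 : ℝ)) ^ 2 * τ) := by
      push_cast; ring
    rw [y]
    push_cast; ring
  · rintro ⟨k, l⟩ h
    simp only [Function.mem_support] at h
    rcases Int.even_or_odd (k + l) with he | ho
    · obtain ⟨n, hn⟩ := he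
      exact ⟨(k - n, n), by simp only [Prod.mk.injEq]; omega⟩
    · exact absurd (by rw [ho.neg_one_zpow]; ring) h

theorem wronskian_identity (τ : ℂ) (hτ : 0 < τ.im) :
    theta3 (2*τ) 0 * Dtau htilde0 τ + theta2 (2*τ) 0 * Dtau htilde1 τ = -1 := by
  have hη0 : eta τ ≠ 0 := by rw [eta_eq]; exact ModularForm.eta_ne_zero hτ
  have hη : DifferentiableAt ℂ eta τ := by
    rw [show eta = ModularForm.eta from funext eta_eq]
    exact ModularForm.differentiableAt_eta_of_mem_upperHalfPlaneSet hτ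
  have h6 : HasDerivAt (fun w => eta w ^ 6) (deriv (fun w => eta w ^ 6) τ) τ :=
    (hη.fun_pow 6).hasDerivAt
  have hne : eta τ ^ 6 ≠ 0 := pow_ne_zero _ hη0
  have d2 := th_deriv (1/2) hτ
  have d3 := th_deriv 0 hτ
  have hW := wronskian_sum hτ
  rw [eta_six τ hτ] at hW
  have f0 : htilde0 = fun w => th (1/2) w / eta w ^ 6 := by
    funext w; rw [htilde0, theta2_eq]
  have f1 : htilde1 = fun w => - th 0 w / eta w ^ 6 := by
    funext w; rw [htilde1, theta3_eq]
  rw [Dtau, Dtau, f0, f1, (d2.fun_div h6 hne).deriv, (d3.fun_neg.fun_div h6 hne).deriv, theta2_eq,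
    theta3_eq]
  beta_reduce
  generalize (∑' n : ℤ, 2 * π * I * (((n : ℂ) + (1/2 : ℝ)) ^ 2 *
      Complex.exp ((2 : ℝ) * (π * I * ((n : ℂ) + (1/2 : ℝ)) ^ 2 * τ)))) = T2 at *
  generalize (∑' n : ℤ, 2 * π * I * (((n : ℂ) + (0 : ℝ)) ^ 2 *
      Complex.exp ((2 : ℝ) * (π * I * ((n : ℂ) + (0 : ℝ)) ^ 2 * τ)))) = T3 at *
  generalize deriv (fun w => eta w ^ 6) τ = E' at *
  generalize eta τ ^ 6 = E at *
  generalize (5 * I / (4 * (τ.im : ℂ))) = c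
  generalize th 0 τ = A at *
  generalize th (1/2) τ = B at *
  have hpi : (π : ℂ) ≠ 0 := by exact_mod_cast Real.pi_ne_zero
  have : A * (I / π * ((T2 * E - B * E') / E ^ 2 + c * (B / E)))
      + B * (I / π * ((-T3 * E - -A * E') / E ^ 2 + c * (-A / E)))
      = I / π * (A * T2 - B * T3) / E := by
    field_simp
    ring
  rw [this, hW]
  field_simp
  simp

end KZ
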